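/- arXiv:1403.2662 — 6 statements merged into one kernel-verified Lean document; each statement's English description precedes it below -/
import Mathlib

section
/- Let φ be a state on 𝒫 and let m ≥ 1. Suppose that every p ∈ 𝒫_{m]} which is φ-orthogonal to 𝒫_{m-1]} (i.e. φ((star q)·p) = 0 for all q ∈ 𝒫_{m-1]}) is a φ-null vector (i.e. φ((star p)·p) = 0). Then for every n ≥ m the same holds: every p ∈ 𝒫_{n]} that is φ-orthogonal to 𝒫_{n-1]} satisfies φ((star p)·p) = 0. -/
open MvPolynomial

/-- The `*`-operation on `MvPolynomial (Fin d) ℂ`: conjugation of coefficients. -/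
noncomputable def pstar {d : ℕ} (p : MvPolynomial (Fin d) ℂ) : MvPolynomial (Fin d) ℂ :=
  map (starRingEnd ℂ) p

/-!
The `φ`-null vectors form a left ideal `N`, by Cauchy–Schwarz. Splitting a vector into its
projection onto `𝒫_{n-1]}` and an orthogonal remainder, the condition "every vector of `𝒫_{n]}`
orthogonal to `𝒫_{n-1]}` is null" becomes the inclusion `𝒫_{n]} ≤ 𝒫_{n-1]} + N`. Since `𝒫_{n]}` is
the `n`-th power of the space `G` of polynomials of degree at most one, multiplying this inclusion
by `G` on the left gives the same inclusion one level higher.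
-/

open scoped ComplexOrder

section LeftKernel

variable {R A : Type*} [CommSemiring R] [Semiring A] [Algebra R A]

/-- The left kernel of a functional `φ`: the `z` with `φ (a * z) = 0` for all `a`. For a positive
functional on a `*`-algebra these are the null vectors, see `mem_leftKernel_iff_of_nonneg`. -/
def leftKernel (φ : A →ₗ[R] R) : Submodule R A :=
  LinearMap.ker ((LinearMap.mul R A).compr₂ φ).flip

lemma mem_leftKernel {φ : A →ₗ[R] R} {z : A} : z ∈ leftKernel φ ↔ ∀ a, φ (a * z) = 0 :=
  LinearMap.ext_iff

lemma mul_leftKernel_le (G : Submodule R A) (φ : A →ₗ[R] R) :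
    G * leftKernel φ ≤ leftKernel φ := by
  refine Submodule.mul_le.2 fun g _ z hz ↦ mem_leftKernel.2 fun a ↦ ?_
  rw [← mul_assoc]
  exact mem_leftKernel.1 hz (a * g)

lemma pow_succ_le_sup_leftKernel {G : Submodule R A} {φ : A →ₗ[R] R} {m n : ℕ} (hmn : m ≤ n)
    (h : G ^ (m + 1) ≤ G ^ m ⊔ leftKernel φ) : G ^ (n + 1) ≤ G ^ n ⊔ leftKernel φ := by
  induction n, hmn using Nat.le_induction with
  | base => exact h
  | succ k _ ih =>
    calc G ^ (k + 1 + 1)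
      _ = G * G ^ (k + 1) := pow_succ' G (k + 1)
      _ ≤ G * (G ^ k ⊔ leftKernel φ) := mul_le_mul_right ih G
      _ = G ^ (k + 1) ⊔ G * leftKernel φ := by rw [Submodule.mul_sup, ← pow_succ']
      _ ≤ G ^ (k + 1) ⊔ leftKernel φ := sup_le_sup_left (mul_leftKernel_le G φ) _

end LeftKernel

lemma exists_mem_forall_inner_sub_eq_zero {𝕜 E : Type*} [RCLike 𝕜] [SeminormedAddCommGroup E]
    [InnerProductSpace 𝕜 E] (V : Submodule 𝕜 E) [FiniteDimensional 𝕜 V] (x : E) :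
    ∃ v ∈ V, ∀ w ∈ V, inner 𝕜 w (x - v) = 0 := by
  -- `Submodule.starProjection` needs a genuine norm, so project in the separation quotient.
  let mk := SeparationQuotient.mkCLM 𝕜 E
  let V' := V.map mk.toLinearMap
  obtain ⟨v, hv, hvx⟩ : V'.starProjection (mk x) ∈ V' := V'.starProjection_apply_mem _
  refine ⟨v, hv, fun w hw ↦ ?_⟩
  have h := V'.sub_starProjection_mem_orthogonal (mk x) (mk w) (Submodule.mem_map_of_mem hw)
  rw [← hvx] at h
  exact h

section PositiveFunctional

variable {A : Type*} [Ring A] [StarRing A] [Algebra ℂ A] [StarModule ℂ A] {φ : A →ₗ[ℂ] ℂ}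

lemma map_star_of_nonneg (hφ : ∀ a, 0 ≤ φ (star a * a)) (a : A) : φ (star a) = star (φ a) := by
  have im_eq_zero (b : A) : (φ (star b * b)).im = 0 := (Complex.nonneg_iff.1 (hφ b)).2.symm
  have im_cross (c : ℂ) : (c * φ a + star c * φ (star a)).im = 0 := by
    have polarization : c * φ a + star c * φ (star a) = φ (star (1 + c • a) * (1 + c • a)) -
        φ (star 1 * 1) - φ (star (c • a) * (c • a)) := by
      simp only [star_add, star_one, star_smul, add_mul, mul_add, one_mul, mul_one, map_add,
        map_smul, smul_eq_mul]
      ring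
    rw [polarization, Complex.sub_im, Complex.sub_im, im_eq_zero, im_eq_zero, im_eq_zero, sub_zero,
      sub_zero]
  have im_add : (φ a).im + (φ (star a)).im = 0 := by simpa using im_cross 1
  have re_sub : (φ a).re - (φ (star a)).re = 0 := by
    simpa [sub_eq_add_neg] using im_cross Complex.I
  exact Complex.ext (sub_eq_zero.1 re_sub).symm (eq_neg_of_add_eq_zero_right im_add)

/-- The semi-inner product `⟪a, b⟫ = φ (star a * b)` of the Gelfand–Naimark–Segal construction. -/
abbrev gnsCore (hφ : ∀ a, 0 ≤ φ (star a * a)) : PreInnerProductSpace.Core ℂ A where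
  inner a b := φ (star a * b)
  conj_inner_symm a b := by
    rw [starRingEnd_apply, ← map_star_of_nonneg hφ, star_mul, star_star]
  re_inner_nonneg a := (Complex.nonneg_iff.1 (hφ a)).1
  add_left a b c := by rw [star_add, add_mul, map_add]
  smul_left a b r := by
    rw [star_smul, smul_mul_assoc, map_smul, smul_eq_mul, starRingEnd_apply]

lemma mem_leftKernel_iff_of_nonneg (hφ : ∀ a, 0 ≤ φ (star a * a)) {z : A} :
    z ∈ leftKernel φ ↔ φ (star z * z) = 0 := by
  refine ⟨fun hz ↦ mem_leftKernel.1 hz (star z), fun hz ↦ mem_leftKernel.2 fun a ↦ ?_⟩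
  let := gnsCore hφ
  have cauchy_schwarz : ‖φ (star (star a) * z)‖ * ‖φ (star z * star a)‖ ≤
      (φ (star (star a) * star a)).re * (φ (star z * z)).re :=
    InnerProductSpace.Core.inner_mul_inner_self_le (𝕜 := ℂ) (star a) z
  rw [star_star, ← star_mul, map_star_of_nonneg hφ, norm_star, hz, Complex.zero_re, mul_zero]
    at cauchy_schwarz
  exact norm_eq_zero.1 (mul_self_eq_zero.1 (cauchy_schwarz.antisymm (mul_self_nonneg _)))

lemma exists_mem_forall_map_star_mul_sub_eq_zero (hφ : ∀ a, 0 ≤ φ (star a * a))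
    (V : Submodule ℂ A) [FiniteDimensional ℂ V] (p : A) :
    ∃ v ∈ V, ∀ q ∈ V, φ (star q * (p - v)) = 0 := by
  let := InnerProductSpace.Core.toSeminormedAddCommGroup (c := gnsCore hφ)
  let := InnerProductSpace.ofCore (gnsCore hφ)
  exact exists_mem_forall_inner_sub_eq_zero V p

/-- Every vector of `W` that is `φ`-orthogonal to `V` is `φ`-null; for `V = 𝒫_{n-1]}` and
`W = 𝒫_{n]}` this is the condition that propagates from one degree to the next. -/
def OrthogonalIsNull (φ : A →ₗ[ℂ] ℂ) (V W : Submodule ℂ A) : Prop :=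
  ∀ p ∈ W, (∀ q ∈ V, φ (star q * p) = 0) → φ (star p * p) = 0

lemma OrthogonalIsNull.le_sup_leftKernel {V W : Submodule ℂ A} [FiniteDimensional ℂ V]
    (h : OrthogonalIsNull φ V W) (hφ : ∀ a, 0 ≤ φ (star a * a)) (hVW : V ≤ W) :
    W ≤ V ⊔ leftKernel φ := by
  intro p hp
  obtain ⟨v, hv, hpv⟩ := exists_mem_forall_map_star_mul_sub_eq_zero hφ V p
  have hnull : p - v ∈ leftKernel φ :=
    (mem_leftKernel_iff_of_nonneg hφ).2 (h _ (W.sub_mem hp (hVW hv)) hpv)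
  exact Submodule.mem_sup.2 ⟨v, hv, p - v, hnull, add_sub_cancel v p⟩

lemma OrthogonalIsNull.of_le_sup_leftKernel {V W : Submodule ℂ A}
    (hφ : ∀ a, 0 ≤ φ (star a * a)) (hW : W ≤ V ⊔ leftKernel φ) : OrthogonalIsNull φ V W := by
  intro p hp hpV
  obtain ⟨v, hv, z, hz, hvz⟩ := Submodule.mem_sup.1 (hW hp)
  have hzp : φ (star z * p) = 0 := by
    rw [← star_star p, ← star_mul, map_star_of_nonneg hφ, mem_leftKernel.1 hz, star_zero]
  calc φ (star p * p)
    _ = φ (star v * p) + φ (star z * p) := by rw [← map_add, ← add_mul, ← star_add, hvz]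
    _ = 0 := by rw [hpV v hv, hzp, add_zero]

theorem stmt_8_general (hφ : ∀ a, 0 ≤ φ (star a * a)) {G : Submodule ℂ A} (hG : G.FG)
    (hG1 : 1 ≤ G) {m n : ℕ} (hm : 1 ≤ m) (hmn : m ≤ n)
    (h : OrthogonalIsNull φ (G ^ (m - 1)) (G ^ m)) : OrthogonalIsNull φ (G ^ (n - 1)) (G ^ n) := by
  obtain ⟨m, rfl⟩ := Nat.exists_eq_add_of_le' hm
  obtain ⟨n, rfl⟩ := Nat.exists_eq_add_of_le' (hm.trans hmn)
  simp only [Nat.add_sub_cancel] at h ⊢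
  have : FiniteDimensional ℂ ↥(G ^ m) := Module.Finite.iff_fg.2 (hG.pow m)
  have hGm : G ^ m ≤ G ^ (m + 1) := pow_le_pow_right₀ hG1 m.le_succ
  exact .of_le_sup_leftKernel hφ <|
    pow_succ_le_sup_leftKernel (Nat.le_of_succ_le_succ hmn) (h.le_sup_leftKernel hφ hGm)

end PositiveFunctional

section MvPolynomial

variable {σ R : Type*} [CommSemiring R]

lemma restrictTotalDegree_mul_le (m n : ℕ) :
    restrictTotalDegree σ R m * restrictTotalDegree σ R n ≤ restrictTotalDegree σ R (m + n) := by
  refine Submodule.mul_le.2 fun p hp q hq ↦ ?_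
  rw [mem_restrictTotalDegree] at hp hq ⊢
  exact (totalDegree_mul p q).trans (add_le_add hp hq)

lemma one_le_restrictTotalDegree (n : ℕ) : 1 ≤ restrictTotalDegree σ R n := by
  rw [Submodule.one_le, mem_restrictTotalDegree, totalDegree_one]
  exact n.zero_le

lemma one_sup_homogeneousSubmodule_one_le :
    1 ⊔ homogeneousSubmodule σ R 1 ≤ restrictTotalDegree σ R 1 := by
  refine sup_le (one_le_restrictTotalDegree 1) fun p hp ↦ ?_
  rw [mem_restrictTotalDegree]
  exact hp.totalDegree_le

lemma restrictTotalDegree_eq_pow (n : ℕ) :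
    restrictTotalDegree σ R n = (1 ⊔ homogeneousSubmodule σ R 1) ^ n := by
  apply le_antisymm
  · intro p hp
    rw [← p.sum_homogeneousComponent]
    refine Submodule.sum_mem _ fun i hi ↦ ?_
    have hin : i ≤ n := by
      rw [mem_restrictTotalDegree] at hp
      grind
    have hi' : homogeneousComponent i p ∈ homogeneousSubmodule σ R 1 ^ i := by
      rw [homogeneousSubmodule_one_pow]
      exact homogeneousComponent_mem i p
    have hpow : homogeneousSubmodule σ R 1 ^ i ≤ (1 ⊔ homogeneousSubmodule σ R 1) ^ n :=
      (pow_le_pow_left' le_sup_right i).trans (pow_le_pow_right₀ le_sup_left hin)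
    exact hpow hi'
  · induction n with
    | zero => exact one_le_restrictTotalDegree 0
    | succ n ih =>
      calc (1 ⊔ homogeneousSubmodule σ R 1) ^ (n + 1)
        _ ≤ restrictTotalDegree σ R n * restrictTotalDegree σ R 1 := by
          rw [pow_succ]
          exact mul_le_mul' ih one_sup_homogeneousSubmodule_one_le
        _ ≤ restrictTotalDegree σ R (n + 1) := restrictTotalDegree_mul_le n 1

lemma one_sup_homogeneousSubmodule_one_fg [Finite σ] : (1 ⊔ homogeneousSubmodule σ R 1).FG := by
  rw [Submodule.one_eq_span]
  exact (Submodule.fg_span_singleton 1).sup (homogeneousSubmodule_fg σ R 1)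

end MvPolynomial

/-- Conjugation of coefficients as the `*`-operation on polynomials; on `MvPolynomial (Fin d) ℂ` it
is definitionally `pstar`. -/
noncomputable abbrev mvPolynomialStarRing {σ R : Type*} [CommSemiring R] [StarRing R] :
    StarRing (MvPolynomial σ R) where
  star p := map (starRingEnd R) p
  star_involutive p := by
    ext s
    simp [coeff_map]
  star_mul p q := by rw [map_mul, mul_comm]
  star_add p q := map_add _ p q

attribute [local instance] mvPolynomialStarRing

lemma starModule_mvPolynomial {σ R : Type*} [CommSemiring R] [StarRing R] :
    StarModule R (MvPolynomial σ R) where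
  star_smul c p := by
    change map (starRingEnd R) (c • p) = star c • map (starRingEnd R) p
    rw [smul_eq_C_mul, map_mul, map_C, smul_eq_C_mul, starRingEnd_apply]

attribute [local instance] starModule_mvPolynomial

/-- If, for a state `φ` and some `m ≥ 1`, every element of `𝒫_{m]}` orthogonal to
`𝒫_{m-1]}` is `φ`-null, then the same holds at every level `n ≥ m`. -/
theorem stmt_8 (d : ℕ) (hd : 1 ≤ d)
    (φ : MvPolynomial (Fin d) ℂ →ₗ[ℂ] ℂ) (hφ1 : φ 1 = 1)
    (hφpos : ∀ p, ∃ r : ℝ, 0 ≤ r ∧ φ (pstar p * p) = (r : ℂ))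
    (m : ℕ) (hm : 1 ≤ m)
    (h : ∀ p ∈ restrictTotalDegree (Fin d) ℂ m,
      (∀ q ∈ restrictTotalDegree (Fin d) ℂ (m - 1), φ (pstar q * p) = 0) →
      φ (pstar p * p) = 0) :
    ∀ n, m ≤ n → ∀ p ∈ restrictTotalDegree (Fin d) ℂ n,
      (∀ q ∈ restrictTotalDegree (Fin d) ℂ (n - 1), φ (pstar q * p) = 0) →
      φ (pstar p * p) = 0 := by
  have hφ (p : MvPolynomial (Fin d) ℂ) : 0 ≤ φ (star p * p) := by
    obtain ⟨r, hr, hφr⟩ := hφpos p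
    exact hφr ▸ Complex.zero_le_real.2 hr
  simp only [restrictTotalDegree_eq_pow] at h ⊢
  exact fun n hmn ↦ stmt_8_general hφ one_sup_homogeneousSubmodule_one_fg le_sup_left hm hmn h
end

section
/- (Symmetric Jacobi relation.) Let φ be a state on 𝒫, let m, n ∈ ℕ with |m − n| > 1, and let j ∈ {1,…,d}. If p ∈ 𝒫_{m]} is φ-orthogonal to 𝒫_{m-1]} and q ∈ 𝒫_{n]} is φ-orthogonal to 𝒫_{n-1]}, then φ((star p)·X_j·q) = 0. Consequently, for such orthogonal components, the multiplication operator by X_j has only three nonzero diagonals with respect to the φ-orthogonal gradation. -/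
open MvPolynomial

/-!
Write `⟨p, q⟩ = φ (p* q)`. Positivity makes this form Hermitian, so orthogonality is a symmetric
relation, and multiplication by `f` moves across the form as multiplication by `f*`. Suppose `f`
has degree at most `k`. Then `⟨p, f q⟩ = ⟨f* p, q⟩` vanishes when `m + k < n`, because `f* p` has
degree less than `n`, and `⟨p, f q⟩` vanishes when `n + k < m`, because `f q` has degree less
than `m`.
-/

theorem isSymm_of_forall_apply_self_eq_ofReal {E : Type*} [AddCommMonoid E] [Module ℂ E]
    {B : E →ₗ⋆[ℂ] E →ₗ[ℂ] ℂ} (hB : ∀ x, ∃ r : ℝ, B x x = r) : B.IsSymm where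
  eq x y := by
    have im_self (z : E) : (B z z).im = 0 := by
      obtain ⟨r, hr⟩ := hB z
      rw [hr, Complex.ofReal_im]
    have im_add : (B x y).im + (B y x).im = 0 := by
      simpa [im_self] using im_self (x + y)
    have re_sub : (B x y).re - (B y x).re = 0 := by
      simpa [im_self, sub_eq_add_neg] using im_self (x + Complex.I • y)
    apply Complex.ext
    · simpa using sub_eq_zero.mp re_sub
    · simpa using neg_eq_of_add_eq_zero_right im_add

section TotalDegree

variable {σ R S : Type*} [CommSemiring R] [CommSemiring S]

variable (σ R) in
/-- The space `𝒫_{n-1]}` of polynomials of total degree less than `n`, with `𝒫_{-1]} = 0`; the case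
split keeps truncated subtraction from turning `𝒫_{-1]}` into the constants. -/
noncomputable def totalDegreeLT (n : ℕ) : Submodule R (MvPolynomial σ R) :=
  if n = 0 then ⊥ else restrictTotalDegree σ R (n - 1)

theorem map_mem_restrictTotalDegree (g : R →+* S) {p : MvPolynomial σ R} {m : ℕ}
    (hp : p ∈ restrictTotalDegree σ R m) : map g p ∈ restrictTotalDegree σ S m := by
  rw [mem_restrictTotalDegree] at hp ⊢
  exact (Finset.sup_mono (support_map_subset g p)).trans hp

theorem mul_mem_totalDegreeLT {p q : MvPolynomial σ R} {k m n : ℕ}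
    (hp : p ∈ restrictTotalDegree σ R k) (hq : q ∈ restrictTotalDegree σ R m) (h : k + m < n) :
    p * q ∈ totalDegreeLT σ R n := by
  rw [mem_restrictTotalDegree] at hp hq
  rw [totalDegreeLT, if_neg (Nat.ne_zero_of_lt h), mem_restrictTotalDegree]
  exact (totalDegree_mul p q).trans ((add_le_add hp hq).trans (Nat.le_sub_one_of_lt h))

end TotalDegree

section ConjForm

variable {σ R : Type*} [CommSemiring R] [StarRing R]

/-- The sesquilinear form `(p, q) ↦ φ (p* q)` of a linear functional `φ`, where `p*` has the
conjugate coefficients of `p`; it expresses `φ`-orthogonality as orthogonality for a form. -/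
noncomputable def conjForm (φ : MvPolynomial σ R →ₗ[R] R) :
    MvPolynomial σ R →ₗ⋆[R] MvPolynomial σ R →ₗ[R] R :=
  LinearMap.mk₂'ₛₗ (starRingEnd R) (RingHom.id R) (fun p q ↦ φ (map (starRingEnd R) p * q))
    (fun p₁ p₂ q ↦ by rw [map_add, add_mul, map_add])
    (fun c p q ↦ by
      rw [smul_eq_C_mul, RingHom.map_mul, map_C, mul_assoc, ← smul_eq_C_mul, map_smul])
    (fun p q₁ q₂ ↦ by rw [mul_add, map_add])
    (fun c p q ↦ by rw [mul_smul_comm, map_smul, RingHom.id_apply])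

theorem conjForm_apply (φ : MvPolynomial σ R →ₗ[R] R) (p q : MvPolynomial σ R) :
    conjForm φ p q = φ (map (starRingEnd R) p * q) :=
  rfl

theorem conjForm_mul_right (φ : MvPolynomial σ R →ₗ[R] R) (p f q : MvPolynomial σ R) :
    conjForm φ p (f * q) = conjForm φ (map (starRingEnd R) f * p) q := by
  have conj_conj : map (starRingEnd R) (map (starRingEnd R) f) = f := by
    rw [map_map, RingHomInvPair.comp_eq, map_id]
  rw [conjForm_apply, conjForm_apply, RingHom.map_mul, conj_conj, mul_left_comm, mul_assoc]

/-- The component of order `n` of the `φ`-orthogonal gradation: the polynomials of total degree at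
most `n` that are `φ`-orthogonal to `𝒫_{n-1]}`. -/
noncomputable def orthogonalComponent (φ : MvPolynomial σ R →ₗ[R] R) (n : ℕ) :
    Submodule R (MvPolynomial σ R) :=
  restrictTotalDegree σ R n ⊓ (totalDegreeLT σ R n).orthogonalBilin (conjForm φ)

theorem stmt_9_general {φ : MvPolynomial σ R →ₗ[R] R} (hφ : (conjForm φ).IsRefl) {k m n : ℕ}
    (hmn : (k : ℤ) < |(m : ℤ) - (n : ℤ)|) {f p q : MvPolynomial σ R}
    (hf : f ∈ restrictTotalDegree σ R k) (hp : p ∈ orthogonalComponent φ m)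
    (hq : q ∈ orthogonalComponent φ n) : conjForm φ p (f * q) = 0 := by
  obtain ⟨hp_deg, hp_orth⟩ := hp
  obtain ⟨hq_deg, hq_orth⟩ := hq
  rcases lt_abs.mp hmn with h | h
  · exact hφ _ _ (hp_orth _ (mul_mem_totalDegreeLT hf hq_deg (by lia)))
  · rw [conjForm_mul_right]
    exact hq_orth _ (mul_mem_totalDegreeLT (map_mem_restrictTotalDegree _ hf) hp_deg (by lia))

end ConjForm

/-- Symmetric Jacobi relation: for a state `φ` and `|m - n| > 1`, if `p ∈ 𝒫_{m]}` is
`φ`-orthogonal to `𝒫_{m-1]}` and `q ∈ 𝒫_{n]}` is `φ`-orthogonal to `𝒫_{n-1]}`, then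
`φ(p* · X_j · q) = 0`; the multiplication by `X_j` is three-diagonal with respect to
the `φ`-orthogonal gradation. Here `𝒫_{-1]} = 0`. -/
theorem stmt_9 (d : ℕ) (hd : 1 ≤ d)
    (φ : MvPolynomial (Fin d) ℂ →ₗ[ℂ] ℂ) (hφ1 : φ 1 = 1)
    (hφpos : ∀ p, ∃ r : ℝ, 0 ≤ r ∧ φ (pstar p * p) = (r : ℂ))
    (m n : ℕ) (hmn : 1 < |(m : ℤ) - (n : ℤ)|) (j : Fin d)
    (p q : MvPolynomial (Fin d) ℂ)
    (hp : p ∈ restrictTotalDegree (Fin d) ℂ m)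
    (hp' : ∀ u ∈ (if m = 0 then (⊥ : Submodule ℂ (MvPolynomial (Fin d) ℂ))
      else restrictTotalDegree (Fin d) ℂ (m - 1)), φ (pstar u * p) = 0)
    (hq : q ∈ restrictTotalDegree (Fin d) ℂ n)
    (hq' : ∀ u ∈ (if n = 0 then (⊥ : Submodule ℂ (MvPolynomial (Fin d) ℂ))
      else restrictTotalDegree (Fin d) ℂ (n - 1)), φ (pstar u * q) = 0) :
    φ (pstar p * (X j * q)) = 0 := by
  have hφ : (conjForm φ).IsSymm :=
    isSymm_of_forall_apply_self_eq_ofReal fun u ↦ (hφpos u).imp fun _ ↦ And.right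
  exact stmt_9_general hφ.isRefl (mod_cast hmn)
    ((mem_restrictTotalDegree ..).mpr (totalDegree_X j).le) ⟨hp, hp'⟩ ⟨hq, hq'⟩
end

section
/- (Quantum decomposition.) Let φ be a state on 𝒫 and let (𝒫_k)_{k∈ℕ} be a family of submodules that are mutually φ-orthogonal (φ((star p)·q) = 0 for p ∈ 𝒫_l, q ∈ 𝒫_k, l ≠ k) and satisfy ⨆_{k≤n} 𝒫_k = 𝒫_{n]} for every n. Then for every n ∈ ℕ, every q ∈ 𝒫_n and every j ∈ {1,…,d} there exist p_{n+1} ∈ 𝒫_{n+1}, p_n ∈ 𝒫_n, p_{n-1} ∈ 𝒫_{n-1} (with 𝒫_{-1} = 0) and r ∈ 𝒫_{n-2]} with φ((star r)·r) = 0 such that X_j·q = p_{n+1} + p_n + p_{n-1} + r. -/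
open MvPolynomial

/-!
Let `T` be symmetric for a form `B` and map `P k` into `⨆ i ∈ S k, P i`, where the `P k` are
mutually orthogonal. For `q ∈ P n`, write `T q = p + r`, where `r` collects the components of
index `k` with `n ∉ S k`. Then `T r` has no component of index `n`, and `r` is orthogonal to `p`,
so `B r r = B r (T q) = B (T r) q = 0`. Multiplication by `X j` is symmetric for
`(p, q) ↦ φ (p* q)` and raises the degree by at most one, so that `S k = {i | i ≤ k + 1}` and `r`
collects the components of index at most `n - 2`.
-/

section BandedDecomposition

variable {R A M N ι : Type*} [CommSemiring R] [CommSemiring A] [AddCommMonoid M] [Module R M]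
  [AddCommMonoid N] [Module A N] {I J : R →+* A} {B : M →ₛₗ[I] M →ₛₗ[J] N}
  {P : ι → Submodule R M}

theorem iSup_le_orthogonalBilin_iSup (hP : Pairwise fun l k ↦ P k ≤ (P l).orthogonalBilin B)
    {s t : Set ι} (hst : Disjoint s t) :
    ⨆ k ∈ t, P k ≤ (⨆ l ∈ s, P l).orthogonalBilin B := by
  refine iSup₂_le fun k hk y hy x hx ↦ ?_
  have hker : ⨆ l ∈ s, P l ≤ LinearMap.ker (B.flip y) :=
    iSup₂_le fun l hl z hz ↦ hP (hst.ne_of_mem hl hk) hy z hz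
  exact hker hx

theorem exists_eq_add_isotropic_of_symmetric
    (hP : Pairwise fun l k ↦ P k ≤ (P l).orthogonalBilin B)
    (T : M →ₗ[R] M) (hsymm : ∀ x y, B (T x) y = B x (T y))
    {S : ι → Set ι} (hT : ∀ k, P k ≤ (⨆ i ∈ S k, P i).comap T) {n : ι} {q : M} (hq : q ∈ P n) :
    ∃ p ∈ ⨆ k ∈ S n ∩ {k | n ∈ S k}, P k, ∃ r ∈ ⨆ k ∈ S n \ {k | n ∈ S k}, P k,
      B r r = 0 ∧ T q = p + r := by
  have hTq : T q ∈ ⨆ k ∈ S n, P k := hT n hq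
  rw [← Set.inter_union_sdiff (S n) {k | n ∈ S k}, iSup_union] at hTq
  obtain ⟨p, hp, r, hr, hpr⟩ := Submodule.mem_sup.mp hTq
  have hrp : B r p = 0 :=
    iSup_le_orthogonalBilin_iSup hP Set.disjoint_sdiff_inter hp r hr
  have hle : ⨆ k ∈ S n \ {k | n ∈ S k}, P k ≤ (⨆ i ∈ ({n}ᶜ : Set ι), P i).comap T := by
    refine iSup₂_le fun k hk ↦ (hT k).trans (Submodule.comap_mono (biSup_mono ?_))
    rintro i hi rfl
    exact hk.2 hi
  have hqn : q ∈ ⨆ k ∈ ({n} : Set ι), P k := by rwa [iSup_singleton]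
  have hTrq : B (T r) q = 0 :=
    iSup_le_orthogonalBilin_iSup hP disjoint_compl_left hqn (T r) (hle hr)
  refine ⟨p, hp, r, hr, ?_, hpr.symm⟩
  calc B r r = B r (p + r) := by rw [map_add, hrp, zero_add]
    _ = B (T r) q := by rw [hpr, hsymm]
    _ = 0 := hTrq

end BandedDecomposition

section NatIndexedSuprema

variable {α : Type*} [CompleteLattice α] (f : ℕ → α) (n : ℕ)

theorem iSup_Iic_succ_inter_eq :
    ⨆ k ∈ Set.Iic (n + 1) ∩ {k | n ∈ Set.Iic (k + 1)}, f k =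
      f (n + 1) ⊔ f n ⊔ if n = 0 then ⊥ else f (n - 1) := by
  rcases n with _ | n
  · have hset : Set.Iic (0 + 1) ∩ {k | 0 ∈ Set.Iic (k + 1)} = {1, 0} := by ext k; grind
    rw [hset, iSup_insert, iSup_singleton, if_pos rfl, sup_bot_eq]
  · have hset : Set.Iic (n + 1 + 1) ∩ {k | n + 1 ∈ Set.Iic (k + 1)} = {n + 2, n + 1, n} := by
      ext k; grind
    rw [hset, iSup_insert, iSup_insert, iSup_singleton, if_neg n.succ_ne_zero,
      Nat.add_sub_cancel, sup_assoc]

theorem iSup_Iic_succ_sdiff_eq :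
    ⨆ k ∈ Set.Iic (n + 1) \ {k | n ∈ Set.Iic (k + 1)}, f k =
      if n ≤ 1 then ⊥ else ⨆ k ≤ n - 2, f k := by
  split_ifs with hn
  · have hset : Set.Iic (n + 1) \ {k | n ∈ Set.Iic (k + 1)} = ∅ := by ext k; grind
    rw [hset, iSup_emptyset]
  · have hset : Set.Iic (n + 1) \ {k | n ∈ Set.Iic (k + 1)} = Set.Iic (n - 2) := by
      ext k; grind
    rw [hset]
    rfl

end NatIndexedSuprema

section MomentForm

variable {R N σ : Type*} [CommSemiring R] [AddCommMonoid N] [Module R N]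

/-- The sesquilinear form `(p, q) ↦ φ (p* q)` of a linear map `φ` on polynomials, where `p*` is
obtained by applying to the coefficients of `p` an arbitrary ring endomorphism `I`, which plays the
role of the conjugation. -/
noncomputable def momentForm (I : R →+* R) (φ : MvPolynomial σ R →ₗ[R] N) :
    MvPolynomial σ R →ₛₗ[I] MvPolynomial σ R →ₗ[R] N :=
  LinearMap.mk₂'ₛₗ I (RingHom.id R) (fun p q ↦ φ (map I p * q))
    (fun p p' q ↦ by rw [map_add, add_mul, map_add])
    (fun c p q ↦ by rw [smul_eq_C_mul, (map I).map_mul, map_C, mul_assoc,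
      ← smul_eq_C_mul, φ.map_smul])
    (fun p q q' ↦ by rw [mul_add, map_add])
    (fun c p q ↦ by rw [mul_smul_comm, map_smul, RingHom.id_apply])

theorem momentForm_apply (I : R →+* R) (φ : MvPolynomial σ R →ₗ[R] N) (p q : MvPolynomial σ R) :
    momentForm I φ p q = φ (map I p * q) :=
  rfl

theorem momentForm_mul_left (I : R →+* R) (φ : MvPolynomial σ R →ₗ[R] N) {f : MvPolynomial σ R}
    (hf : map I f = f) (p q : MvPolynomial σ R) :
    momentForm I φ (f * p) q = momentForm I φ p (f * q) := by
  rw [momentForm_apply, momentForm_apply, (map I).map_mul, hf, mul_left_comm, mul_assoc]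

theorem X_mul_mem_restrictTotalDegree (j : σ) {n : ℕ} {p : MvPolynomial σ R}
    (hp : p ∈ restrictTotalDegree σ R n) : X j * p ∈ restrictTotalDegree σ R (n + 1) := by
  rw [mem_restrictTotalDegree] at hp ⊢
  calc (X j * p).totalDegree ≤ (X j : MvPolynomial σ R).totalDegree + p.totalDegree :=
        totalDegree_mul _ _
    _ ≤ 1 + n := add_le_add ((totalDegree_monomial_le _ _).trans (by simp)) hp
    _ = n + 1 := add_comm 1 n

theorem stmt_10_general (I : R →+* R) (φ : MvPolynomial σ R →ₗ[R] N)
    (P : ℕ → Submodule R (MvPolynomial σ R))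
    (horth : ∀ l k, l ≠ k → ∀ p ∈ P l, ∀ q ∈ P k, φ (map I p * q) = 0)
    (hfil : ∀ n, (⨆ k ≤ n, P k) = restrictTotalDegree σ R n)
    (n : ℕ) (q : MvPolynomial σ R) (hq : q ∈ P n) (j : σ) :
    ∃ p1 ∈ P (n + 1), ∃ p2 ∈ P n, ∃ p3 ∈ (if n = 0 then ⊥ else P (n - 1)),
      ∃ r ∈ (if n ≤ 1 then ⊥ else restrictTotalDegree σ R (n - 2)),
        φ (map I r * r) = 0 ∧ X j * q = p1 + p2 + p3 + r := by
  have hP : Pairwise fun l k ↦ P k ≤ (P l).orthogonalBilin (momentForm I φ) :=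
    fun l k hlk y hy x hx ↦ horth l k hlk x hx y hy
  have hdeg (k : ℕ) :
      P k ≤ (⨆ i ∈ Set.Iic (k + 1), P i).comap (LinearMap.mulLeft R (X j)) := by
    have hPk : P k ≤ restrictTotalDegree σ R k :=
      (hfil k).le.trans' (le_iSup₂_of_le k le_rfl le_rfl)
    simp only [Set.mem_Iic, hfil]
    exact fun p hp ↦ X_mul_mem_restrictTotalDegree j (hPk hp)
  obtain ⟨p, hp, r, hr, hrr, hqpr⟩ := exists_eq_add_isotropic_of_symmetric hP
    (LinearMap.mulLeft R (X j)) (momentForm_mul_left I φ (map_X I j)) hdeg hq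
  rw [iSup_Iic_succ_inter_eq] at hp
  rw [iSup_Iic_succ_sdiff_eq, hfil] at hr
  obtain ⟨p12, hp12, p3, hp3, rfl⟩ := Submodule.mem_sup.mp hp
  obtain ⟨p1, hp1, p2, hp2, rfl⟩ := Submodule.mem_sup.mp hp12
  exact ⟨p1, hp1, p2, hp2, p3, hp3, r, hr, hrr, hqpr⟩

end MomentForm

/-- Quantum decomposition: if `(𝒫_k)` are mutually `φ`-orthogonal submodules with
`⨆_{k ≤ n} 𝒫_k = 𝒫_{n]}`, then for `q ∈ 𝒫_n` and any coordinate `X_j` one can write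
`X_j·q = p_{n+1} + p_n + p_{n-1} + r` with `p_k ∈ 𝒫_k` (and `𝒫_{-1} = 0`) and
`r ∈ 𝒫_{n-2]}` a `φ`-null vector. -/
theorem stmt_10 (d : ℕ) (hd : 1 ≤ d)
    (φ : MvPolynomial (Fin d) ℂ →ₗ[ℂ] ℂ) (hφ1 : φ 1 = 1)
    (hφpos : ∀ p, ∃ r : ℝ, 0 ≤ r ∧ φ (pstar p * p) = (r : ℂ))
    (P : ℕ → Submodule ℂ (MvPolynomial (Fin d) ℂ))
    (horth : ∀ l k, l ≠ k → ∀ p ∈ P l, ∀ q ∈ P k, φ (pstar p * q) = 0)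
    (hfil : ∀ n, (⨆ k ≤ n, P k) = restrictTotalDegree (Fin d) ℂ n)
    (n : ℕ) (q : MvPolynomial (Fin d) ℂ) (hq : q ∈ P n) (j : Fin d) :
    ∃ p1 ∈ P (n + 1), ∃ p2 ∈ P n,
      ∃ p3 ∈ (if n = 0 then (⊥ : Submodule ℂ (MvPolynomial (Fin d) ℂ)) else P (n - 1)),
        ∃ r ∈ (if n ≤ 1 then (⊥ : Submodule ℂ (MvPolynomial (Fin d) ℂ))
            else restrictTotalDegree (Fin d) ℂ (n - 2)),
          φ (pstar r * r) = 0 ∧ X j * q = p1 + p2 + p3 + r :=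
  stmt_10_general (starRingEnd ℂ) φ P horth hfil n q hq j
end

section
/- (Commutativity of creators.) Let (𝒫_k)_{k∈ℕ} be an independent family of submodules of 𝒫 with ⨆_k 𝒫_k = 𝒫, such that for all j ∈ {1,…,d} and all m ∈ ℕ one has X_j·𝒫_m ⊆ 𝒫_{m+1} ⊔ 𝒫_m ⊔ 𝒫_{m-1} (with 𝒫_{-1} = 0), and let π_k : 𝒫 → 𝒫_k denote the projection onto the k-th summand along this direct sum decomposition. Then for all j, k ∈ {1,…,d}, all n ∈ ℕ and all q ∈ 𝒫_n: π_{n+2}(X_j·π_{n+1}(X_k·q)) = π_{n+2}(X_k·π_{n+1}(X_j·q)). -/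
open MvPolynomial

/-! Multiplication by a coordinate raises the degree by at most one, and the creator `a⁺_j` is its
top-degree part. Taking top-degree parts of operators `A`, `B` that raise the degree by a bounded
amount is multiplicative: the components of `B q` below the top have degree too low for `A` to bring
them back to the top. So `a⁺_j a⁺_k` and `a⁺_k a⁺_j` are both the top-degree part of multiplication
by `X_j X_k = X_k X_j`. -/

section TopDegree

variable {ι R M : Type*} [PartialOrder ι] [Semiring R] [AddCommMonoid M] [Module R M]
  {P : ι → Submodule R M}

theorem iSup_lt_le_ker {k : ι} {f : Module.End R M} (hf : ∀ l < k, ∀ p ∈ P l, f p = 0) :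
    ⨆ l < k, P l ≤ LinearMap.ker f :=
  iSup₂_le hf

theorem exists_eq_proj_add_of_mem_iSup_le {k : ι} {f : Module.End R M}
    (hfid : ∀ p ∈ P k, f p = p) (hf0 : ∀ l < k, ∀ p ∈ P l, f p = 0)
    {p : M} (hp : p ∈ ⨆ l ≤ k, P l) : ∃ r ∈ ⨆ l < k, P l, p = f p + r := by
  rw [biSup_le_eq_sup] at hp
  obtain ⟨r, hr, t, ht, rfl⟩ := Submodule.mem_sup.1 hp
  have hfr : f r = 0 := iSup_lt_le_ker hf0 hr
  exact ⟨r, hr, by rw [map_add, hfr, hfid t ht, zero_add, add_comm]⟩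

/-- The operator `A` raises the degree by at most `a`, where `P m` is the space of homogeneous
elements of degree `m`. -/
def RaisesDegreeLE [Add ι] (P : ι → Submodule R M) (A : Module.End R M) (a : ι) : Prop :=
  ∀ m, ∀ p ∈ P m, A p ∈ ⨆ l ≤ m + a, P l

namespace RaisesDegreeLE

theorem apply_mem_iSup_lt [Add ι] [AddRightStrictMono ι] {A : Module.End R M} {a k : ι}
    (hA : RaisesDegreeLE P A a) {p : M} (hp : p ∈ ⨆ l < k, P l) :
    A p ∈ ⨆ l < k + a, P l := by
  suffices ⨆ l < k, P l ≤ (⨆ l < k + a, P l).comap A from this hp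
  refine iSup₂_le fun m hm q hq ↦ ?_
  have hlt : ∀ l ≤ m + a, l < k + a := fun l hl ↦ hl.trans_lt (add_lt_add_left hm a)
  have hle : ⨆ l ≤ m + a, P l ≤ ⨆ l < k + a, P l := biSup_mono hlt
  exact hle (hA m q hq)

theorem proj_apply_proj_apply [Add ι] [AddRightStrictMono ι] {A B : Module.End R M} {a b : ι}
    (hA : RaisesDegreeLE P A a) (hB : RaisesDegreeLE P B b) {π : ι → Module.End R M}
    (hπid : ∀ k, ∀ p ∈ P k, π k p = p) (hπ0 : ∀ k, ∀ l < k, ∀ p ∈ P l, π k p = 0)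
    {n : ι} {q : M} (hq : q ∈ P n) :
    π (n + b + a) (A (π (n + b) (B q))) = π (n + b + a) (A (B q)) := by
  obtain ⟨r, hr, hBq⟩ :=
    exists_eq_proj_add_of_mem_iSup_le (hπid (n + b)) (hπ0 (n + b)) (hB n q hq)
  have hAr : π (n + b + a) (A r) = 0 :=
    iSup_lt_le_ker (hπ0 (n + b + a)) (hA.apply_mem_iSup_lt hr)
  calc π (n + b + a) (A (π (n + b) (B q)))
      = π (n + b + a) (A (π (n + b) (B q) + r)) := by rw [map_add, map_add, hAr, add_zero]
    _ = π (n + b + a) (A (B q)) := by rw [← hBq]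

theorem of_three_term {P : ℕ → Submodule R M} {A : Module.End R M}
    (hA : ∀ m, ∀ p ∈ P m, A p ∈ P (m + 1) ⊔ P m ⊔ (if m = 0 then ⊥ else P (m - 1))) :
    RaisesDegreeLE P A 1 := by
  intro m p hp
  have hle : ∀ l ≤ m + 1, P l ≤ ⨆ l ≤ m + 1, P l := fun l hl ↦ le_iSup₂_of_le l hl le_rfl
  refine sup_le (sup_le (hle _ le_rfl) (hle _ m.le_succ)) ?_ (hA m p hp)
  split_ifs
  · exact bot_le
  · exact hle _ (by lia)

end RaisesDegreeLE

theorem stmt_13_general [AddCommSemigroup ι] [AddRightStrictMono ι] {A B : Module.End R M}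
    (hAB : Commute A B) {a b : ι} (hA : RaisesDegreeLE P A a) (hB : RaisesDegreeLE P B b)
    {π : ι → Module.End R M} (hπid : ∀ k, ∀ p ∈ P k, π k p = p)
    (hπ0 : ∀ k, ∀ l < k, ∀ p ∈ P l, π k p = 0) {n : ι} {q : M} (hq : q ∈ P n) :
    π (n + b + a) (A (π (n + b) (B q))) = π (n + a + b) (B (π (n + a) (A q))) := by
  have hABq : A (B q) = B (A q) := LinearMap.congr_fun hAB.eq q
  rw [hA.proj_apply_proj_apply hB hπid hπ0 hq, hB.proj_apply_proj_apply hA hπid hπ0 hq, hABq,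
    add_right_comm]

end TopDegree

/-- Commutativity of creators: if `𝒫 = ⊕_k 𝒫_k` is a direct sum decomposition such
that each `X_j·𝒫_m ⊆ 𝒫_{m+1} ⊔ 𝒫_m ⊔ 𝒫_{m-1}`, and `π_k` are the projections onto
the summands, then `π_{n+2}(X_j·π_{n+1}(X_k·q)) = π_{n+2}(X_k·π_{n+1}(X_j·q))` for
every `q ∈ 𝒫_n`, i.e. `a⁺_j a⁺_k = a⁺_k a⁺_j`. -/
theorem stmt_13 (d : ℕ) (hd : 1 ≤ d)
    (P : ℕ → Submodule ℂ (MvPolynomial (Fin d) ℂ))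
    (hind : iSupIndep P) (hsup : (⨆ k, P k) = ⊤)
    (hjac : ∀ (j : Fin d) (m : ℕ), ∀ p ∈ P m,
      X j * p ∈ P (m + 1) ⊔ P m ⊔
        (if m = 0 then (⊥ : Submodule ℂ (MvPolynomial (Fin d) ℂ)) else P (m - 1)))
    (π : ℕ → MvPolynomial (Fin d) ℂ →ₗ[ℂ] MvPolynomial (Fin d) ℂ)
    (hπmem : ∀ k p, π k p ∈ P k)
    (hπid : ∀ k, ∀ p ∈ P k, π k p = p)
    (hπ0 : ∀ k l, k ≠ l → ∀ p ∈ P l, π k p = 0)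
    (j k : Fin d) (n : ℕ) (q : MvPolynomial (Fin d) ℂ) (hq : q ∈ P n) :
    π (n + 2) (X j * π (n + 1) (X k * q)) = π (n + 2) (X k * π (n + 1) (X j * q)) := by
  have hX (i : Fin d) : RaisesDegreeLE P (LinearMap.mulLeft ℂ (X i)) 1 := .of_three_term (hjac i)
  exact stmt_13_general ((Commute.all (X j) (X k)).map (Algebra.lmul ℂ (MvPolynomial (Fin d) ℂ)))
    (hX j) (hX k) hπid (fun k l hl ↦ hπ0 k l hl.ne') hq
end

section
/- Let (𝒫_k)_{k∈ℕ} be an independent family of submodules of 𝒫 with ⨆_k 𝒫_k = 𝒫, such that for all j ∈ {1,…,d} and all m ∈ ℕ one has X_j·𝒫_m ⊆ 𝒫_{m+1} ⊔ 𝒫_m ⊔ 𝒫_{m-1} (with 𝒫_{-1} = 0), and let π_k denote the projection onto 𝒫_k along this decomposition. Then for all j, k ∈ {1,…,d}, all n ∈ ℕ and all q ∈ 𝒫_n: π_{n+1}(X_j·π_{n+1}(X_k·q)) + π_{n+1}(X_j·π_n(X_k·q)) = π_{n+1}(X_k·π_{n+1}(X_j·q)) + π_{n+1}(X_k·π_n(X_j·q)).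 (This is the relation [a⁺_j, a⁰_k] + [a⁰_j, a⁺_k] = 0 for the creation and preservation parts of the coordinates.) -/
open MvPolynomial

/-! Suppose `A` raises the index of a direct sum decomposition by at most one, and let `π` be the
projections. Then in `π (n + 1) (A x)`, for `x` of index at most `n + 1`, only the components of
`x` of index `n + 1` and `n` matter: `A` sends the lower ones to index at most `n`. Applied to
`x = B q` with `q` of index `n`, this turns the left side of the relation into
`π (n + 1) (A (B q))`, which is symmetric in `A` and `B` when they commute. -/

section ProjectionFamily

variable {ι R M : Type*} [Semiring R] [AddCommMonoid M] [Module R M]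
  {P : ι → Submodule R M} {π : ι → M →ₗ[R] M}

theorem proj_eq_zero_of_mem_iSup_le [Preorder ι]
    (hπ_ne : ∀ k l, k ≠ l → ∀ p ∈ P l, π k p = 0) {k m : ι} (hmk : m < k)
    {x : M} (hx : x ∈ ⨆ l ≤ m, P l) : π k x = 0 := by
  have hker : ⨆ l ≤ m, P l ≤ LinearMap.ker (π k) :=
    iSup₂_le fun l hl p hp ↦ hπ_ne k l (hl.trans_lt hmk).ne' p hp
  exact hker hx

variable [LinearOrder ι] [Add ι] [One ι] [SuccAddOrder ι] [NoMaxOrder ι]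

theorem proj_add_one_apply_eq_of_mem_iSup_le (hπ_self : ∀ k, ∀ p ∈ P k, π k p = p)
    (hπ_ne : ∀ k l, k ≠ l → ∀ p ∈ P l, π k p = 0) {A : M →ₗ[R] M}
    (hA : ∀ m, ∀ p ∈ P m, A p ∈ ⨆ l ≤ m + 1, P l) {n : ι} {x : M}
    (hx : x ∈ ⨆ l ≤ n + 1, P l) :
    π (n + 1) (A (π (n + 1) x)) + π (n + 1) (A (π n x)) = π (n + 1) (A x) := by
  have hn : n < n + 1 := Order.lt_add_one_iff.mpr le_rfl
  suffices hle : ⨆ l ≤ n + 1, P l ≤ LinearMap.eqLocus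
      (π (n + 1) ∘ₗ A ∘ₗ π (n + 1) + π (n + 1) ∘ₗ A ∘ₗ π n) (π (n + 1) ∘ₗ A) from hle hx
  refine iSup₂_le fun l hl p hp ↦ ?_
  change π (n + 1) (A (π (n + 1) p)) + π (n + 1) (A (π n p)) = π (n + 1) (A p)
  rcases hl.eq_or_lt with rfl | hl
  · rw [hπ_self _ p hp, hπ_ne _ _ hn.ne p hp, map_zero, map_zero, add_zero]
  rcases (Order.lt_add_one_iff.mp hl).eq_or_lt with rfl | hln
  · rw [hπ_self _ p hp, hπ_ne _ _ hn.ne' p hp, map_zero, map_zero, zero_add]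
  · have hAp : π (n + 1) (A p) = 0 :=
      proj_eq_zero_of_mem_iSup_le hπ_ne ((Order.add_one_le_of_lt hln).trans_lt hn) (hA l p hp)
    rw [hπ_ne _ _ hl.ne' p hp, hπ_ne _ _ hln.ne' p hp, hAp, map_zero, map_zero, add_zero]

theorem stmt_14_general (hπ_self : ∀ k, ∀ p ∈ P k, π k p = p)
    (hπ_ne : ∀ k l, k ≠ l → ∀ p ∈ P l, π k p = 0) {A B : Module.End R M} (hAB : Commute A B)
    (hA : ∀ m, ∀ p ∈ P m, A p ∈ ⨆ l ≤ m + 1, P l)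
    (hB : ∀ m, ∀ p ∈ P m, B p ∈ ⨆ l ≤ m + 1, P l) {n : ι} {q : M} (hq : q ∈ P n) :
    π (n + 1) (A (π (n + 1) (B q))) + π (n + 1) (A (π n (B q))) =
      π (n + 1) (B (π (n + 1) (A q))) + π (n + 1) (B (π n (A q))) := by
  calc
    _ = π (n + 1) (A (B q)) := proj_add_one_apply_eq_of_mem_iSup_le hπ_self hπ_ne hA (hB n q hq)
    _ = π (n + 1) (B (A q)) := congrArg (π (n + 1)) (LinearMap.congr_fun hAB.eq q)
    _ = _ := (proj_add_one_apply_eq_of_mem_iSup_le hπ_self hπ_ne hB (hA n q hq)).symm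

end ProjectionFamily

theorem three_term_sup_le_iSup_le {α : Type*} [CompleteLattice α] (P : ℕ → α) (m : ℕ) :
    P (m + 1) ⊔ P m ⊔ (if m = 0 then ⊥ else P (m - 1)) ≤ ⨆ l ≤ m + 1, P l := by
  have hle : ∀ k ≤ m + 1, P k ≤ ⨆ l ≤ m + 1, P l := fun k hk ↦ le_iSup₂_of_le k hk le_rfl
  refine sup_le (sup_le (hle _ le_rfl) (hle _ (by omega))) ?_
  split_ifs
  · exact bot_le
  · exact hle _ (by omega)

/-- The relation `[a⁺_j, a⁰_k] + [a⁰_j, a⁺_k] = 0` for the creation and preservation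
parts of the coordinates, with respect to a direct sum decomposition `𝒫 = ⊕_k 𝒫_k`
such that each `X_j·𝒫_m ⊆ 𝒫_{m+1} ⊔ 𝒫_m ⊔ 𝒫_{m-1}`, `π_k` being the projections. -/
theorem stmt_14 (d : ℕ) (hd : 1 ≤ d)
    (P : ℕ → Submodule ℂ (MvPolynomial (Fin d) ℂ))
    (hind : iSupIndep P) (hsup : (⨆ k, P k) = ⊤)
    (hjac : ∀ (j : Fin d) (m : ℕ), ∀ p ∈ P m,
      X j * p ∈ P (m + 1) ⊔ P m ⊔
        (if m = 0 then (⊥ : Submodule ℂ (MvPolynomial (Fin d) ℂ)) else P (m - 1)))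
    (π : ℕ → MvPolynomial (Fin d) ℂ →ₗ[ℂ] MvPolynomial (Fin d) ℂ)
    (hπmem : ∀ k p, π k p ∈ P k)
    (hπid : ∀ k, ∀ p ∈ P k, π k p = p)
    (hπ0 : ∀ k l, k ≠ l → ∀ p ∈ P l, π k p = 0)
    (j k : Fin d) (n : ℕ) (q : MvPolynomial (Fin d) ℂ) (hq : q ∈ P n) :
    π (n + 1) (X j * π (n + 1) (X k * q)) + π (n + 1) (X j * π n (X k * q)) =
      π (n + 1) (X k * π (n + 1) (X j * q)) + π (n + 1) (X k * π n (X j * q)) := by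
  have hX (i : Fin d) (m : ℕ) (p : MvPolynomial (Fin d) ℂ) (hp : p ∈ P m) :=
    three_term_sup_le_iSup_le P m (hjac i m p hp)
  exact stmt_14_general hπid hπ0 ((Commute.all (X j) (X k)).map (Algebra.lmul ℂ _)) (hX j) (hX k) hq
end

section
/- Let (𝒫_k)_{k∈ℕ} be an independent family of submodules of 𝒫 with ⨆_k 𝒫_k = 𝒫, such that for all j ∈ {1,…,d} and all m ∈ ℕ one has X_j·𝒫_m ⊆ 𝒫_{m+1} ⊔ 𝒫_m ⊔ 𝒫_{m-1} (with 𝒫_{-1} = 0), and let π_k denote the projection onto 𝒫_k along this decomposition. Then for all j, k ∈ {1,…,d}, all n ∈ ℕ and all q ∈ 𝒫_n: π_n(X_j·π_{n+1}(X_k·q)) + π_n(X_j·π_n(X_k·q)) + π_n(X_j·π_{n-1}(X_k·q)) = π_n(X_k·π_{n+1}(X_j·q)) + π_n(X_k·π_n(X_j·q)) + π_n(X_k·π_{n-1}(X_j·q)). (This is the relation [a⁺_j, a⁻_k] + [a⁰_j, a⁰_k] + [a⁻_j, a⁺_k] = 0.) -/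
open MvPolynomial

/-!
The projections `π (n + 1)`, `π n`, `π (n - 1)` reassemble every vector of
`P (n + 1) ⊔ P n ⊔ P (n - 1)`. So for tridiagonal operators `A` and `B` the three terms on each side
add up to the diagonal block `π n (A (B q))`, respectively `π n (B (A q))`, and the relation is the
block at `(n, n)` of `A B = B A`.
-/

section Projections

variable {R M : Type*} [Semiring R] [AddCommMonoid M] [Module R M]

theorem sum_projections_eq_self_of_mem_iSup {ι : Type*} {P : ι → Submodule R M}
    {π : ι → M →ₗ[R] M} (hπ_self : ∀ i, ∀ x ∈ P i, π i x = x)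
    (hπ_ne : ∀ i l, i ≠ l → ∀ x ∈ P l, π i x = 0)
    {s : Finset ι} {x : M} (hx : x ∈ ⨆ i ∈ s, P i) : ∑ i ∈ s, π i x = x := by
  have hle : ⨆ i ∈ s, P i ≤ LinearMap.eqLocus (∑ i ∈ s, π i) LinearMap.id := by
    refine iSup₂_le fun l hl y hy ↦ ?_
    rw [LinearMap.mem_eqLocus, LinearMap.sum_apply, LinearMap.id_apply,
      Finset.sum_eq_single_of_mem l hl fun i _ hil ↦ hπ_ne i l hil y hy, hπ_self l y hy]
  simpa only [LinearMap.mem_eqLocus, LinearMap.sum_apply, LinearMap.id_apply] using hle hx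

variable {P : ℕ → Submodule R M} {π : ℕ → M →ₗ[R] M}

theorem add_adjacent_projections_eq_self (hπ_self : ∀ i, ∀ x ∈ P i, π i x = x)
    (hπ_ne : ∀ i l, i ≠ l → ∀ x ∈ P l, π i x = 0) {n : ℕ} {x : M}
    (hx : x ∈ P (n + 1) ⊔ P n ⊔ (if n = 0 then ⊥ else P (n - 1))) :
    π (n + 1) x + π n x + (if n = 0 then 0 else π (n - 1) x) = x := by
  cases n with
  | zero =>
    have hmem : x ∈ ⨆ i ∈ ({1, 0} : Finset ℕ), P i := by
      simpa only [Finset.iSup_insert, Finset.iSup_singleton, zero_add, if_true, sup_bot_eq] using hx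
    simpa using sum_projections_eq_self_of_mem_iSup hπ_self hπ_ne hmem
  | succ m =>
    have hmem : x ∈ ⨆ i ∈ ({m + 2, m + 1, m} : Finset ℕ), P i := by
      simpa [Finset.iSup_insert, -Finset.mem_insert, sup_assoc] using hx
    simpa [add_assoc] using sum_projections_eq_self_of_mem_iSup hπ_self hπ_ne hmem

theorem stmt_15_general (hπ_self : ∀ i, ∀ x ∈ P i, π i x = x)
    (hπ_ne : ∀ i l, i ≠ l → ∀ x ∈ P l, π i x = 0)
    {A B : Module.End R M} (hAB : Commute A B) {n : ℕ} {q : M}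
    (hA : A q ∈ P (n + 1) ⊔ P n ⊔ (if n = 0 then ⊥ else P (n - 1)))
    (hB : B q ∈ P (n + 1) ⊔ P n ⊔ (if n = 0 then ⊥ else P (n - 1))) :
    π n (A (π (n + 1) (B q))) + π n (A (π n (B q))) +
        π n (A (if n = 0 then 0 else π (n - 1) (B q))) =
      π n (B (π (n + 1) (A q))) + π n (B (π n (A q))) +
        π n (B (if n = 0 then 0 else π (n - 1) (A q))) := by
  have hAq := add_adjacent_projections_eq_self hπ_self hπ_ne hA
  have hBq := add_adjacent_projections_eq_self hπ_self hπ_ne hB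
  calc
    _ = π n (A (B q)) := by simp only [← map_add, hBq]
    _ = π n (B (A q)) := congrArg (π n) (LinearMap.congr_fun hAB.eq q)
    _ = _ := by simp only [← map_add, hAq]

end Projections

/-- The relation `[a⁺_j, a⁻_k] + [a⁰_j, a⁰_k] + [a⁻_j, a⁺_k] = 0`, with respect to a
direct sum decomposition `𝒫 = ⊕_k 𝒫_k` such that each
`X_j·𝒫_m ⊆ 𝒫_{m+1} ⊔ 𝒫_m ⊔ 𝒫_{m-1}`, `π_k` being the projections (and `π_{-1} := 0`). -/
theorem stmt_15 (d : ℕ) (hd : 1 ≤ d)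
    (P : ℕ → Submodule ℂ (MvPolynomial (Fin d) ℂ))
    (hind : iSupIndep P) (hsup : (⨆ k, P k) = ⊤)
    (hjac : ∀ (j : Fin d) (m : ℕ), ∀ p ∈ P m,
      X j * p ∈ P (m + 1) ⊔ P m ⊔
        (if m = 0 then (⊥ : Submodule ℂ (MvPolynomial (Fin d) ℂ)) else P (m - 1)))
    (π : ℕ → MvPolynomial (Fin d) ℂ →ₗ[ℂ] MvPolynomial (Fin d) ℂ)
    (hπmem : ∀ k p, π k p ∈ P k)
    (hπid : ∀ k, ∀ p ∈ P k, π k p = p)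
    (hπ0 : ∀ k l, k ≠ l → ∀ p ∈ P l, π k p = 0)
    (j k : Fin d) (n : ℕ) (q : MvPolynomial (Fin d) ℂ) (hq : q ∈ P n) :
    π n (X j * π (n + 1) (X k * q)) + π n (X j * π n (X k * q)) +
        π n (X j * (if n = 0 then 0 else π (n - 1) (X k * q))) =
      π n (X k * π (n + 1) (X j * q)) + π n (X k * π n (X j * q)) +
        π n (X k * (if n = 0 then 0 else π (n - 1) (X j * q))) :=
  stmt_15_general hπid hπ0
    ((Commute.all (X j) (X k)).map (Algebra.lmul ℂ (MvPolynomial (Fin d) ℂ)))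
    (hjac j n q hq) (hjac k n q hq)
end
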